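/- arXiv:2402.06988 — 2 statements merged into one kernel-verified Lean document; each statement's English description precedes it below -/
import Mathlib

section
/- If a judgement Γ ⊢ T' ≤ U' appears in a derivation tree whose root is ∅ ⊢ T ≤ U built from the algorithmic subtyping rules, then T' ∈ Sub(T) ∪ Sub(U) and U' ∈ Sub(T) ∪ Sub(U), and for every assumption V ≤ W ∈ Γ we have V ∈ Sub(T) ∪ Sub(U) and W ∈ Sub(T) ∪ Sub(U). -/
/-- Binary session types: `end`, type variables, recursion, input/output
message types with a list of payload types, selection and branching
(labels are positional). -/
inductive SType : Type where
  | endT : SType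
  | var : ℕ → SType
  | mu : ℕ → SType → SType
  | inp : List SType → SType → SType
  | out : List SType → SType → SType
  | sel : List SType → SType
  | bra : List SType → SType

namespace SType

/-- The size |T| of a session type. -/
def size : SType → ℕ
  | .endT => 1
  | .var _ => 1
  | .mu _ t => t.size + 1
  | .inp ts u => 1 + (ts.attach.map (fun t => t.1.size)).sum + u.size
  | .out ts u => 1 + (ts.attach.map (fun t => t.1.size)).sum + u.size
  | .sel ts => 1 + (ts.attach.map (fun t => t.1.size)).sum
  | .bra ts => 1 + (ts.attach.map (fun t => t.1.size)).sum
decreasing_by all_goals first | (have h := List.sizeOf_lt_of_mem t.2; simp_wf; omega) | (simp_wf; try omega)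

/-- Free type variables. -/
def fv : SType → Set ℕ
  | .endT => ∅
  | .var x => {x}
  | .mu x t => t.fv \ {x}
  | .inp ts u => (ts.attach.map (fun t => t.1.fv)).foldr (· ∪ ·) ∅ ∪ u.fv
  | .out ts u => (ts.attach.map (fun t => t.1.fv)).foldr (· ∪ ·) ∅ ∪ u.fv
  | .sel ts => (ts.attach.map (fun t => t.1.fv)).foldr (· ∪ ·) ∅
  | .bra ts => (ts.attach.map (fun t => t.1.fv)).foldr (· ∪ ·) ∅
decreasing_by all_goals first | (have h := List.sizeOf_lt_of_mem t.2; simp_wf; omega) | (simp_wf; try omega)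

/-- Bound type variables (variables bound by a μ-binder). -/
def bv : SType → Set ℕ
  | .endT => ∅
  | .var _ => ∅
  | .mu x t => {x} ∪ t.bv
  | .inp ts u => (ts.attach.map (fun t => t.1.bv)).foldr (· ∪ ·) ∅ ∪ u.bv
  | .out ts u => (ts.attach.map (fun t => t.1.bv)).foldr (· ∪ ·) ∅ ∪ u.bv
  | .sel ts => (ts.attach.map (fun t => t.1.bv)).foldr (· ∪ ·) ∅
  | .bra ts => (ts.attach.map (fun t => t.1.bv)).foldr (· ∪ ·) ∅
decreasing_by all_goals first | (have h := List.sizeOf_lt_of_mem t.2; simp_wf; omega) | (simp_wf; try omega)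

/-- Substitution `T[Q/X]` (written `subst Q X T`).  It respects shadowing;
it is capture-avoiding whenever no μ-binder of `T` lying above a free
occurrence of `X` binds a free variable of `Q` (in the statements below this
is guaranteed by hypotheses or by the closedness of `Q`). -/
def subst (q : SType) (x : ℕ) : SType → SType
  | .endT => .endT
  | .var y => if y = x then q else .var y
  | .mu y t => if y = x then .mu y t else .mu y (subst q x t)
  | .inp ts u => .inp (ts.attach.map (fun t => subst q x t.1)) (subst q x u)
  | .out ts u => .out (ts.attach.map (fun t => subst q x t.1)) (subst q x u)
  | .sel ts => .sel (ts.attach.map (fun t => subst q x t.1))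
  | .bra ts => .bra (ts.attach.map (fun t => subst q x t.1))
decreasing_by all_goals first | (have h := List.sizeOf_lt_of_mem t.2; simp_wf; omega) | (simp_wf; try omega)

/-- The set of bottom-up subterms `SubBU(T)`. -/
def SubBU : SType → Set SType
  | .endT => {.endT}
  | .var x => {.var x}
  | .mu x t => insert (.mu x t) ((subst (.mu x t) x) '' t.SubBU)
  | .inp ts u =>
      insert (.inp ts u)
        ((ts.attach.map (fun t => t.1.SubBU)).foldr (· ∪ ·) ∅ ∪ u.SubBU)
  | .out ts u =>
      insert (.out ts u)
        ((ts.attach.map (fun t => t.1.SubBU)).foldr (· ∪ ·) ∅ ∪ u.SubBU)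
  | .sel ts =>
      insert (.sel ts) ((ts.attach.map (fun t => t.1.SubBU)).foldr (· ∪ ·) ∅)
  | .bra ts =>
      insert (.bra ts) ((ts.attach.map (fun t => t.1.SubBU)).foldr (· ∪ ·) ∅)
decreasing_by all_goals first | (have h := List.sizeOf_lt_of_mem t.2; simp_wf; omega) | (simp_wf; try omega)

end SType
namespace SType

/-- `Sub t s` means `s ∈ Sub(t)`: the top-down subterm relation, the smallest
set containing `t` and closed under unfolding of μ-binders and under taking
immediate components of message and choice constructors. -/
inductive Sub (t : SType) : SType → Prop
  | refl : Sub t t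
  | mu_unfold {x s} : Sub t (.mu x s) → Sub t (subst (.mu x s) x s)
  | inp_payload {ts u s} : Sub t (.inp ts u) → s ∈ ts → Sub t s
  | inp_cont {ts u} : Sub t (.inp ts u) → Sub t u
  | out_payload {ts u s} : Sub t (.out ts u) → s ∈ ts → Sub t s
  | out_cont {ts u} : Sub t (.out ts u) → Sub t u
  | sel_payload {ts s} : Sub t (.sel ts) → s ∈ ts → Sub t s
  | bra_payload {ts s} : Sub t (.bra ts) → s ∈ ts → Sub t s

/-- Nesting depth nd(T). -/
def nd : SType → ℕ
  | .endT => 1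
  | .var _ => 1
  | .mu _ t => t.nd + 1
  | .inp ts u => ((ts.attach.map (fun t => t.1.nd)).foldr max u.nd) + 1
  | .out ts u => ((ts.attach.map (fun t => t.1.nd)).foldr max u.nd) + 1
  | .sel ts => ((ts.attach.map (fun t => t.1.nd)).foldr max 0) + 1
  | .bra ts => ((ts.attach.map (fun t => t.1.nd)).foldr max 0) + 1
decreasing_by all_goals first | (have h := List.sizeOf_lt_of_mem t.2; simp_wf; omega) | (simp_wf; try omega)

/-- A judgement `Σ ⊢ T ≤ U` of the Gay–Hole algorithmic subtyping system:
the component `j.1` is the set Σ of assumed pairs (finite along any actual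
derivation) and `j.2 = (T, U)`. -/
abbrev Judgement := Set (SType × SType) × SType × SType

/-- `Step j j'` holds iff the judgement `j'` is a premise generated directly
above the conclusion `j` by one of the algorithmic subtyping rules
AS-RecL, AS-RecR, AS-In, AS-Out, AS-Bra, AS-Sel (the rules AS-Assump and
AS-End have no premises). -/
inductive Step : Judgement → Judgement → Prop
  | recL {C : Set (SType × SType)} {x t u} :
      Step (C, .mu x t, u) (insert (.mu x t, u) C, subst (.mu x t) x t, u)
  | recR {C : Set (SType × SType)} {t x u} :
      Step (C, t, .mu x u) (insert (t, .mu x u) C, t, subst (.mu x u) x u)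
  | inp_payload {C : Set (SType × SType)} {ts us v w} (i : ℕ)
      (hlen : ts.length = us.length) (h1 : i < ts.length) (h2 : i < us.length) :
      Step (C, .inp ts v, .inp us w) (C, ts[i], us[i])
  | inp_cont {C : Set (SType × SType)} {ts us v w}
      (hlen : ts.length = us.length) :
      Step (C, .inp ts v, .inp us w) (C, v, w)
  | out_payload {C : Set (SType × SType)} {ts us v w} (i : ℕ)
      (hlen : ts.length = us.length) (h1 : i < ts.length) (h2 : i < us.length) :
      Step (C, .out ts v, .out us w) (C, us[i], ts[i])
  | out_cont {C : Set (SType × SType)} {ts us v w}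
      (hlen : ts.length = us.length) :
      Step (C, .out ts v, .out us w) (C, v, w)
  | bra {C : Set (SType × SType)} {ss ts : List SType} (i : ℕ)
      (hlen : ss.length ≤ ts.length) (h1 : i < ss.length) (h2 : i < ts.length) :
      Step (C, .bra ss, .bra ts) (C, ss[i], ts[i])
  | sel {C : Set (SType × SType)} {ss ts : List SType} (i : ℕ)
      (hlen : ts.length ≤ ss.length) (h1 : i < ss.length) (h2 : i < ts.length) :
      Step (C, .sel ss, .sel ts) (C, ss[i], ts[i])

/-- `StepAlg j j'` : the premise `j'` is generated directly above the
conclusion `j` by the algorithm, i.e. by an algorithmic subtyping rule where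
AS-Assump has highest priority (no rule with premises is applied to a
judgement whose pair is already in Σ) and AS-RecL is preferred to AS-RecR. -/
inductive StepAlg : Judgement → Judgement → Prop
  | recL {C : Set (SType × SType)} {x t u} (h : (SType.mu x t, u) ∉ C) :
      StepAlg (C, .mu x t, u) (insert (.mu x t, u) C, subst (.mu x t) x t, u)
  | recR {C : Set (SType × SType)} {t x u} (h : (t, SType.mu x u) ∉ C)
      (hnotmu : ∀ y s, t ≠ .mu y s) :
      StepAlg (C, t, .mu x u) (insert (t, .mu x u) C, t, subst (.mu x u) x u)
  | inp_payload {C : Set (SType × SType)} {ts us v w} (i : ℕ)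
      (h : (SType.inp ts v, SType.inp us w) ∉ C)
      (hlen : ts.length = us.length) (h1 : i < ts.length) (h2 : i < us.length) :
      StepAlg (C, .inp ts v, .inp us w) (C, ts[i], us[i])
  | inp_cont {C : Set (SType × SType)} {ts us v w}
      (h : (SType.inp ts v, SType.inp us w) ∉ C)
      (hlen : ts.length = us.length) :
      StepAlg (C, .inp ts v, .inp us w) (C, v, w)
  | out_payload {C : Set (SType × SType)} {ts us v w} (i : ℕ)
      (h : (SType.out ts v, SType.out us w) ∉ C)
      (hlen : ts.length = us.length) (h1 : i < ts.length) (h2 : i < us.length) :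
      StepAlg (C, .out ts v, .out us w) (C, us[i], ts[i])
  | out_cont {C : Set (SType × SType)} {ts us v w}
      (h : (SType.out ts v, SType.out us w) ∉ C)
      (hlen : ts.length = us.length) :
      StepAlg (C, .out ts v, .out us w) (C, v, w)
  | bra {C : Set (SType × SType)} {ss ts : List SType} (i : ℕ)
      (h : (SType.bra ss, SType.bra ts) ∉ C)
      (hlen : ss.length ≤ ts.length) (h1 : i < ss.length) (h2 : i < ts.length) :
      StepAlg (C, .bra ss, .bra ts) (C, ss[i], ts[i])
  | sel {C : Set (SType × SType)} {ss ts : List SType} (i : ℕ)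
      (h : (SType.sel ss, SType.sel ts) ∉ C)
      (hlen : ts.length ≤ ss.length) (h1 : i < ss.length) (h2 : i < ts.length) :
      StepAlg (C, .sel ss, .sel ts) (C, ss[i], ts[i])

/-- `Reaches j j'` : the judgement `j'` appears in a derivation tree with
root `j`, i.e. it is generated along some chain of premises starting from `j`. -/
def Reaches : Judgement → Judgement → Prop := Relation.ReflTransGen Step

/-- `ReachesAlg j j'` : `j'` appears in the derivation tree constructed
bottom-up from the root `j` with AS-Assump given highest priority and
AS-RecL preferred to AS-RecR. -/
def ReachesAlg : Judgement → Judgement → Prop := Relation.ReflTransGen StepAlg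

end SType
namespace SType

/-- `Unfolds t u` : the unfolding of `t` is `u`, where
`unfold(μX.T) = unfold(T[μX.T/X])` and `unfold(T) = T` for non-μ terms
(for contractive types this computes the unique unfolding). -/
inductive Unfolds : SType → SType → Prop
  | mu {x t u} : Unfolds (subst (.mu x t) x t) u → Unfolds (.mu x t) u
  | done {t} : (∀ x s, t ≠ .mu x s) → Unfolds t t

/-- `R` is a type simulation (for coinductive type equality): related types
have unfoldings with the same top constructor, identical (positional) label
sets, and componentwise `R`-related payloads and continuations. -/
def IsEqSimulation (R : Set (SType × SType)) : Prop :=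
  ∀ ⦃t u : SType⦄, (t, u) ∈ R →
    (Unfolds t .endT → Unfolds u .endT) ∧
    (∀ ts t', Unfolds t (.inp ts t') →
      ∃ us u', Unfolds u (.inp us u') ∧ ts.length = us.length ∧
        (∀ i (h1 : i < ts.length) (h2 : i < us.length), (ts[i], us[i]) ∈ R) ∧
        (t', u') ∈ R) ∧
    (∀ ts t', Unfolds t (.out ts t') →
      ∃ us u', Unfolds u (.out us u') ∧ ts.length = us.length ∧
        (∀ i (h1 : i < ts.length) (h2 : i < us.length), (ts[i], us[i]) ∈ R) ∧
        (t', u') ∈ R) ∧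
    (∀ ts, Unfolds t (.sel ts) →
      ∃ us, Unfolds u (.sel us) ∧ ts.length = us.length ∧
        (∀ i (h1 : i < ts.length) (h2 : i < us.length), (ts[i], us[i]) ∈ R)) ∧
    (∀ ts, Unfolds t (.bra ts) →
      ∃ us, Unfolds u (.bra us) ∧ ts.length = us.length ∧
        (∀ i (h1 : i < ts.length) (h2 : i < us.length), (ts[i], us[i]) ∈ R))

/-- Coinductive type equality `T =_c U`: both `(T, U)` and `(U, T)` are
contained in some type simulation. -/
def EqC (t u : SType) : Prop :=
  (∃ R, IsEqSimulation R ∧ (t, u) ∈ R) ∧ (∃ R, IsEqSimulation R ∧ (u, t) ∈ R)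

/-- `R` is a coinductive subtyping simulation: unfoldings have matching top
constructors with the usual covariant/contravariant component conditions
(inputs covariant in payloads and continuation; outputs contravariant in
payloads, covariant in continuation; branching allows the right side more
labels; selection allows the left side more labels). -/
def IsSubSimulation (R : Set (SType × SType)) : Prop :=
  ∀ ⦃t u : SType⦄, (t, u) ∈ R →
    (Unfolds t .endT → Unfolds u .endT) ∧
    (∀ ts t', Unfolds t (.inp ts t') →
      ∃ us u', Unfolds u (.inp us u') ∧ ts.length = us.length ∧
        (∀ i (h1 : i < ts.length) (h2 : i < us.length), (ts[i], us[i]) ∈ R) ∧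
        (t', u') ∈ R) ∧
    (∀ ts t', Unfolds t (.out ts t') →
      ∃ us u', Unfolds u (.out us u') ∧ ts.length = us.length ∧
        (∀ i (h1 : i < ts.length) (h2 : i < us.length), (us[i], ts[i]) ∈ R) ∧
        (t', u') ∈ R) ∧
    (∀ ts, Unfolds t (.sel ts) →
      ∃ us, Unfolds u (.sel us) ∧ us.length ≤ ts.length ∧
        (∀ i (h1 : i < ts.length) (h2 : i < us.length), (ts[i], us[i]) ∈ R)) ∧
    (∀ ts, Unfolds t (.bra ts) →
      ∃ us, Unfolds u (.bra us) ∧ ts.length ≤ us.length ∧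
        (∀ i (h1 : i < ts.length) (h2 : i < us.length), (ts[i], us[i]) ∈ R))

/-- Coinductive subtyping `T ≤_c U`: the pair is contained in some
coinductive subtyping simulation. -/
def SubC (t u : SType) : Prop :=
  ∃ R, IsSubSimulation R ∧ (t, u) ∈ R

/-! ### The exponential example.

We fix concrete variable names: `X` is `0`, `Z` is `1`, and `Y_i` is `i + 2`.
-/

/-- `μZ.!⟨Z⟩.Z`. -/
def muZ : SType := .mu 1 (.out [.var 1] (.var 1))

/-- `V l = ?⟨μZ.!⟨Z⟩.Z⟩.….?⟨μZ.!⟨Z⟩.Z⟩.X` (`l` repetitions of the prefix). -/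
def V : ℕ → SType
  | 0 => .var 0
  | l + 1 => .inp [muZ] (V l)

/-- `chain k = ?⟨μY_{k-1}.V_{k-1}⟩.….?⟨μY_1.V_1⟩.?⟨μY_0.V_0⟩.X`. -/
def chain : ℕ → SType
  | 0 => .var 0
  | r + 1 => .inp [.mu (r + 2) (V r)] (chain r)

/-- `T_k = μX.?⟨μY_{k-1}.V_{k-1}⟩.….?⟨μY_1.V_1⟩.?⟨μY_0.V_0⟩.X`. -/
def Tk (k : ℕ) : SType := .mu 0 (chain k)

/-- `W_r^k = V_r[T_k/X]`. -/
def W (k r : ℕ) : SType := subst (Tk k) 0 (V r)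

/-- `S_r^k = ?⟨μY_{r-1}.W_{r-1}^k⟩.….?⟨μY_0.W_0^k⟩.T_k`. -/
def Sexp (k : ℕ) : ℕ → SType
  | 0 => Tk k
  | r + 1 => .inp [.mu (r + 2) (W k r)] (Sexp k r)

/-- `μX.!⟨X⟩.X`. -/
def muOut : SType := .mu 0 (.out [.var 0] (.var 0))

/-- The assumption set `𝒮_l` determined by a sequence `α₁, …, α_l`
(given as `α 1, …, α l` for a function `α : ℕ → ℕ`):
`𝒮_l = {T_k ≤ T_{k+1}, S_k^k ≤ T_{k+1}}
  ∪ {μY_{αᵢ}.W_{αᵢ}^k ≤ μY_{αᵢ+i}.W_{αᵢ+i}^{k+1} | 1 ≤ i ≤ l}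
  ∪ {W_{αᵢ}^k ≤ μY_{αᵢ+i}.W_{αᵢ+i}^{k+1} | 1 ≤ i ≤ l}
  ∪ {T_k ≤ W_i^{k+1} | 1 ≤ i ≤ l} ∪ {S_{k−i}^k ≤ T_{k+1} | 1 ≤ i ≤ l}`. -/
def calS (k l : ℕ) (α : ℕ → ℕ) : Set (SType × SType) :=
  {(Tk k, Tk (k + 1)), (Sexp k k, Tk (k + 1))}
  ∪ (fun i => (SType.mu (α i + 2) (W k (α i)),
      SType.mu (α i + i + 2) (W (k + 1) (α i + i)))) '' (Set.Icc 1 l)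
  ∪ (fun i => (W k (α i),
      SType.mu (α i + i + 2) (W (k + 1) (α i + i)))) '' (Set.Icc 1 l)
  ∪ (fun i => (Tk k, W (k + 1) i)) '' (Set.Icc 1 l)
  ∪ (fun i => (Sexp k (k - i), Tk (k + 1))) '' (Set.Icc 1 l)

end SType
namespace SType

/-- `renameFree y z t` replaces every free occurrence of the variable `y`
in `t` by `z` (respecting shadowing): the renaming used by alpha-conversion. -/
def renameFree (y z : ℕ) : SType → SType
  | .endT => .endT
  | .var w => if w = y then .var z else .var w
  | .mu x t => if x = y then .mu x t else .mu x (renameFree y z t)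
  | .inp ts u => .inp (ts.attach.map (fun t => renameFree y z t.1)) (renameFree y z u)
  | .out ts u => .out (ts.attach.map (fun t => renameFree y z t.1)) (renameFree y z u)
  | .sel ts => .sel (ts.attach.map (fun t => renameFree y z t.1))
  | .bra ts => .bra (ts.attach.map (fun t => renameFree y z t.1))
decreasing_by all_goals first | (have h := List.sizeOf_lt_of_mem t.2; simp_wf; omega) | (simp_wf; try omega)

/-- Alpha-equivalence: `T'` is an alpha-variant of `T` (bound variables of
μ-binders may be renamed). -/
inductive AlphaEq : SType → SType → Prop
  | endT : AlphaEq .endT .endT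
  | var (x : ℕ) : AlphaEq (.var x) (.var x)
  | mu {x y : ℕ} {t t' : SType} (z : ℕ)
      (hz : z ∉ fv (SType.mu x t) ∪ bv t ∪ fv (SType.mu y t') ∪ bv t') :
      AlphaEq (renameFree x z t) (renameFree y z t') →
      AlphaEq (.mu x t) (.mu y t')
  | inp {ts us : List SType} {u v : SType} (hlen : ts.length = us.length)
      (hpay : ∀ i (h1 : i < ts.length) (h2 : i < us.length), AlphaEq ts[i] us[i])
      (hcont : AlphaEq u v) : AlphaEq (.inp ts u) (.inp us v)
  | out {ts us : List SType} {u v : SType} (hlen : ts.length = us.length)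
      (hpay : ∀ i (h1 : i < ts.length) (h2 : i < us.length), AlphaEq ts[i] us[i])
      (hcont : AlphaEq u v) : AlphaEq (.out ts u) (.out us v)
  | sel {ts us : List SType} (hlen : ts.length = us.length)
      (hpay : ∀ i (h1 : i < ts.length) (h2 : i < us.length), AlphaEq ts[i] us[i]) :
      AlphaEq (.sel ts) (.sel us)
  | bra {ts us : List SType} (hlen : ts.length = us.length)
      (hpay : ∀ i (h1 : i < ts.length) (h2 : i < us.length), AlphaEq ts[i] us[i]) :
      AlphaEq (.bra ts) (.bra us)

end SType

theorem SType.step_inv (P : SType → Prop)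
    (hmu : ∀ x s, P (.mu x s) → P (SType.subst (.mu x s) x s))
    (hip : ∀ ts u s, P (.inp ts u) → s ∈ ts → P s)
    (hic : ∀ ts u, P (.inp ts u) → P u)
    (hop : ∀ ts u s, P (.out ts u) → s ∈ ts → P s)
    (hoc : ∀ ts u, P (.out ts u) → P u)
    (hs : ∀ ts s, P (.sel ts) → s ∈ ts → P s)
    (hb : ∀ ts s, P (.bra ts) → s ∈ ts → P s)
    (j j' : SType.Judgement) (h : SType.Step j j')
    (hj : P j.2.1 ∧ P j.2.2 ∧ ∀ V W, (V, W) ∈ j.1 → P V ∧ P W) :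
    P j'.2.1 ∧ P j'.2.2 ∧ ∀ V W, (V, W) ∈ j'.1 → P V ∧ P W := by
  obtain ⟨h1, h2, h3⟩ := hj
  cases h with
  | recL =>
    refine ⟨hmu _ _ h1, h2, fun V W hm => ?_⟩
    rcases Set.mem_insert_iff.1 hm with e | hm
    · cases e; exact ⟨h1, h2⟩
    · exact h3 V W hm
  | recR =>
    refine ⟨h1, hmu _ _ h2, fun V W hm => ?_⟩
    rcases Set.mem_insert_iff.1 hm with e | hm
    · cases e; exact ⟨h1, h2⟩
    · exact h3 V W hm
  | inp_payload i _ _ _ =>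
    exact ⟨hip _ _ _ h1 (List.getElem_mem _), hip _ _ _ h2 (List.getElem_mem _), h3⟩
  | inp_cont => exact ⟨hic _ _ h1, hic _ _ h2, h3⟩
  | out_payload i _ _ _ =>
    exact ⟨hop _ _ _ h2 (List.getElem_mem _), hop _ _ _ h1 (List.getElem_mem _), h3⟩
  | out_cont => exact ⟨hoc _ _ h1, hoc _ _ h2, h3⟩
  | bra i _ _ _ => exact ⟨hb _ _ h1 (List.getElem_mem _), hb _ _ h2 (List.getElem_mem _), h3⟩
  | sel i _ _ _ => exact ⟨hs _ _ h1 (List.getElem_mem _), hs _ _ h2 (List.getElem_mem _), h3⟩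

/-- If a judgement `Γ ⊢ T' ≤ U'` appears in a derivation tree
with root `∅ ⊢ T ≤ U` built from the algorithmic subtyping rules, then
`T', U' ∈ Sub(T) ∪ Sub(U)`, and for every assumption `V ≤ W ∈ Γ` also
`V, W ∈ Sub(T) ∪ Sub(U)`. -/
theorem reaches_mem_sub (T U : SType) (Γ : Set (SType × SType)) (T' U' : SType)
    (h : SType.Reaches (∅, T, U) (Γ, T', U')) :
    (SType.Sub T T' ∨ SType.Sub U T') ∧ (SType.Sub T U' ∨ SType.Sub U U') ∧
      ∀ V W, (V, W) ∈ Γ →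
        (SType.Sub T V ∨ SType.Sub U V) ∧ (SType.Sub T W ∨ SType.Sub U W) := by
  have key : ∀ j, SType.Reaches (∅, T, U) j →
      (SType.Sub T j.2.1 ∨ SType.Sub U j.2.1) ∧ (SType.Sub T j.2.2 ∨ SType.Sub U j.2.2) ∧
      ∀ V W, (V, W) ∈ j.1 →
        (SType.Sub T V ∨ SType.Sub U V) ∧ (SType.Sub T W ∨ SType.Sub U W) := by
    intro j hj
    unfold SType.Reaches at hj
    induction hj with
    | refl => exact ⟨.inl .refl, .inr .refl, fun V W hm => absurd hm (Set.notMem_empty _)⟩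
    | tail _ hst ih =>
      exact SType.step_inv (fun s => SType.Sub T s ∨ SType.Sub U s)
        (fun _ _ h => h.imp .mu_unfold .mu_unfold)
        (fun _ _ _ h m => h.imp (.inp_payload · m) (.inp_payload · m))
        (fun _ _ h => h.imp .inp_cont .inp_cont)
        (fun _ _ _ h m => h.imp (.out_payload · m) (.out_payload · m))
        (fun _ _ h => h.imp .out_cont .out_cont)
        (fun _ _ h m => h.imp (.sel_payload · m) (.sel_payload · m))
        (fun _ _ h m => h.imp (.bra_payload · m) (.bra_payload · m)) _ _ hst ih
  exact key _ h
end

section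
/- Let T_k be as in the exponential example. Distinct sequences (α₁, …, α_l) with 0 ≤ α_i < k − i (over all 0 ≤ l < k) yield distinct assumption sets 𝒮_l in the derivation of ∅ ⊢ T_k ≤ T_{k+1}; hence the derivation tree of ∅ ⊢ T_k ≤ T_{k+1} built from the algorithmic subtyping rules contains at least (k−1)! distinct judgements. -/
namespace SType

/-- Constructor tag. -/
def ctag : SType → ℕ
  | .inp _ _ => 1
  | _ => 0

/-- Head binder (of the term, or of its first payload). -/
def cbd : SType → ℕ
  | .mu x _ => x
  | .inp (.mu x _ :: _) _ => x
  | _ => 0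

/-- Number of leading input prefixes. -/
def cln : SType → ℕ
  | .inp _ u => cln u + 1
  | _ => 0

theorem W_zero (k : ℕ) : W k 0 = Tk k := by simp [W, V, subst]

theorem W_succ (k r : ℕ) : W k (r + 1) = .inp [muZ] (W k r) := by
  simp [W, V, subst, muZ]

theorem Sexp_succ (k r : ℕ) : Sexp k (r + 1) = .inp [.mu (r + 2) (W k r)] (Sexp k r) := rfl

theorem subst_chain (k r : ℕ) : subst (Tk k) 0 (chain r) = Sexp k r := by
  induction r with
  | zero => simp [chain, subst, Sexp]
  | succ r ih => simp [chain, subst, Sexp, ih, W]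

theorem subst_V (q : SType) (a r : ℕ) : subst q (a + 2) (V r) = V r := by
  induction r with
  | zero => simp [V, subst]
  | succ r ih => simp [V, subst, ih, muZ]

theorem subst_chain' (q : SType) (a r : ℕ) : subst q (a + 2) (chain r) = chain r := by
  induction r with
  | zero => simp [chain, subst]
  | succ r ih => simp [chain, subst, ih, subst_V]

theorem subst_W (q : SType) (a k r : ℕ) : subst q (a + 2) (W k r) = W k r := by
  induction r with
  | zero => simp [W_zero, Tk, subst, subst_chain']
  | succ r ih => simp [W_succ, subst, ih, muZ]

@[simp] theorem ctag_mu (x t) : ctag (.mu x t) = 0 := rfl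
@[simp] theorem cbd_mu (x t) : cbd (.mu x t) = x := rfl
@[simp] theorem ctag_inp (x t) : ctag (.inp x t) = 1 := rfl
@[simp] theorem ctag_Tk (k) : ctag (Tk k) = 0 := rfl
@[simp] theorem cbd_Tk (k) : cbd (Tk k) = 0 := rfl
@[simp] theorem cln_Tk (k) : cln (Tk k) = 0 := rfl
@[simp] theorem ctag_W (k r) : ctag (W k r) = min r 1 := by
  cases r <;> simp [W_zero, W_succ]
@[simp] theorem cbd_W (k r) : cbd (W k r) = min r 1 := by
  cases r with
  | zero => simp [W_zero]
  | succ r => simp [W_succ, cbd, muZ]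
@[simp] theorem cln_W (k r) : cln (W k r) = r := by
  induction r with
  | zero => simp [W_zero]
  | succ r ih => simp [W_succ, cln, ih]
@[simp] theorem ctag_S (k r) : ctag (Sexp k r) = min r 1 := by
  cases r <;> simp [Sexp]
@[simp] theorem cbd_S (k r) : cbd (Sexp k r) = r + min r 1 := by
  cases r with
  | zero => simp [Sexp]
  | succ r => simp [Sexp, cbd]
@[simp] theorem cln_S (k r) : cln (Sexp k r) = r := by
  induction r with
  | zero => simp [Sexp]
  | succ r ih => simp [Sexp, cln, ih]

/-- The pair `μY_a.W_a^k ≤ μY_{a+i}.W_{a+i}^{k+1}`. -/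
def mm (k a i : ℕ) : SType × SType :=
  (.mu (a + 2) (W k a), .mu (a + i + 2) (W (k + 1) (a + i)))

theorem calS_aux (k l₁ l₂ : ℕ) (α₁ α₂ : ℕ → ℕ) (h : calS k l₁ α₁ = calS k l₂ α₂)
    (i : ℕ) (h1 : 1 ≤ i) (h2 : i ≤ l₁) : i ≤ l₂ ∧ α₁ i = α₂ i := by
  have hm : mm k (α₁ i) i ∈ calS k l₁ α₁ :=
    Or.inl (Or.inl (Or.inl (Or.inr ⟨i, ⟨h1, h2⟩, rfl⟩)))
  rw [h] at hm
  rcases hm with ((((hm | hm) | ⟨j, ⟨hj1, hj2⟩, hm⟩) | ⟨j, ⟨hj1, hj2⟩, hm⟩) | ⟨j, ⟨hj1, hj2⟩, hm⟩) |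
    ⟨j, ⟨hj1, hj2⟩, hm⟩
  all_goals
    have e1 := congrArg (fun p => ctag p.1) hm
    have e2 := congrArg (fun p => cbd p.1) hm
    have e3 := congrArg (fun p => ctag p.2) hm
    have e4 := congrArg (fun p => cbd p.2) hm
    simp only [mm, ctag_mu, cbd_mu, ctag_Tk, cbd_Tk, ctag_W, cbd_W, ctag_S, cbd_S] at e1 e2 e3 e4
  · omega
  · omega
  · have : i = j := by omega
    subst this
    omega
  all_goals omega

/-- Coded description of the pairs that may occur in an assumption set at level `l`. -/
def Ok (k l : ℕ) (α : ℕ → ℕ) (p : SType × SType) : Prop :=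
  (ctag p.1 = 0 ∧ cbd p.1 = 0 ∧ ctag p.2 = 0 ∧ cbd p.2 = 0) ∨
  (∃ i, i ≤ l ∧ ctag p.1 = 1 ∧ cln p.1 = k - i ∧ ctag p.2 = 0 ∧ cbd p.2 = 0) ∨
  (∃ i, 1 ≤ i ∧ i ≤ l ∧ ctag p.1 = 0 ∧ cbd p.1 = α i + 2 ∧ ctag p.2 = 0 ∧ cbd p.2 = α i + i + 2) ∨
  (∃ i a, 1 ≤ i ∧ i ≤ l ∧ ctag p.1 = min a 1 ∧ cbd p.1 = min a 1 ∧ cln p.1 = a ∧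
    ctag p.2 = 0 ∧ cbd p.2 = a + i + 2) ∨
  (∃ i, 1 ≤ i ∧ i ≤ l ∧ ctag p.1 = 0 ∧ cbd p.1 = 0 ∧ ctag p.2 = 1 ∧ cln p.2 = i) ∨
  (∃ i, 1 ≤ i ∧ i ≤ l ∧ ctag p.1 = 1 ∧ cbd p.1 = k + 1 ∧ ctag p.2 = 0 ∧ cbd p.2 = i + 2)

theorem Ok.mono {k l α p} (h : Ok k l α p) : Ok k (l + 1) α p := by
  rcases h with h | ⟨i, h, h'⟩ | ⟨i, h0, h, h'⟩ | ⟨i, a, h0, h, h'⟩ | ⟨i, h0, h, h'⟩ | ⟨i, h0, h, h'⟩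
  · exact Or.inl h
  · exact Or.inr (Or.inl ⟨i, by omega, h'⟩)
  · exact Or.inr (Or.inr (Or.inl ⟨i, h0, by omega, h'⟩))
  · exact Or.inr (Or.inr (Or.inr (Or.inl ⟨i, a, h0, by omega, h'⟩)))
  · exact Or.inr (Or.inr (Or.inr (Or.inr (Or.inl ⟨i, h0, by omega, h'⟩))))
  · exact Or.inr (Or.inr (Or.inr (Or.inr (Or.inr ⟨i, h0, by omega, h'⟩))))

/-- No pair of two inputs. -/
def NoInp (C : Set (SType × SType)) : Prop := ∀ ts u ts' u', (SType.inp ts u, SType.inp ts' u') ∉ C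

theorem noInp_of_ok {k l α C} (h : ∀ p ∈ C, Ok k l α p) : NoInp C := by
  intro ts u ts' u' hm
  have := h _ hm
  simp only [Ok, ctag_inp] at this
  omega

theorem NoInp.insert {C p} (h : NoInp C) (hp : ctag p.1 = 0 ∨ ctag p.2 = 0) :
    NoInp (insert p C) := by
  intro ts u ts' u' hm
  rcases hm with hm | hm
  · subst hm; simp at hp
  · exact h _ _ _ _ hm

theorem reach_SS {C} (h : NoInp C) (k k' r s m : ℕ) :
    ReachesAlg (C, Sexp k (r + m), Sexp k' (s + m)) (C, Sexp k r, Sexp k' s) := by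
  induction m with
  | zero => exact Relation.ReflTransGen.refl
  | succ m ih => exact Relation.ReflTransGen.head (StepAlg.inp_cont (h _ _ _ _) rfl) ih

theorem reach_WW {C} (h : NoInp C) (k k' r s m : ℕ) :
    ReachesAlg (C, W k (r + m), W k' (s + m)) (C, W k r, W k' s) := by
  induction m with
  | zero => exact Relation.ReflTransGen.refl
  | succ m ih =>
    rw [← Nat.add_assoc, ← Nat.add_assoc, W_succ, W_succ]
    exact Relation.ReflTransGen.head (StepAlg.inp_cont (h _ _ _ _) rfl) ih

theorem reach_SW {C} (h : NoInp C) (k k' r s m : ℕ) :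
    ReachesAlg (C, Sexp k (r + m), W k' (s + m)) (C, Sexp k r, W k' s) := by
  induction m with
  | zero => exact Relation.ReflTransGen.refl
  | succ m ih =>
    rw [← Nat.add_assoc, ← Nat.add_assoc, W_succ, Sexp_succ]
    exact Relation.ReflTransGen.head (StepAlg.inp_cont (h _ _ _ _) rfl) ih

theorem not_mu {t : SType} (h : ctag t = 1) : ∀ y s, t ≠ .mu y s := by
  rintro y s rfl; simp at h

theorem step_recL_T {C} {k : ℕ} {u} (h : (Tk k, u) ∉ C) :
    StepAlg (C, Tk k, u) (insert (Tk k, u) C, Sexp k k, u) := by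
  have := StepAlg.recL (C := C) (x := 0) (t := chain k) (u := u) h
  rw [← Tk, subst_chain] at this
  exact this

theorem step_recR_T {C} {k : ℕ} {t} (h : (t, Tk k) ∉ C) (ht : ctag t = 1) :
    StepAlg (C, t, Tk k) (insert (t, Tk k) C, t, Sexp k k) := by
  have := StepAlg.recR (C := C) (x := 0) (u := chain k) (t := t) h (not_mu ht)
  rw [← Tk, subst_chain] at this
  exact this

theorem step_recL_Y {C} {k a : ℕ} {u} (h : (SType.mu (a + 2) (W k a), u) ∉ C) :
    StepAlg (C, .mu (a + 2) (W k a), u) (insert (.mu (a + 2) (W k a), u) C, W k a, u) := by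
  have := StepAlg.recL (C := C) h
  rw [subst_W] at this
  exact this

theorem step_recR_Y {C} {k a : ℕ} {t} (h : (t, SType.mu (a + 2) (W k a)) ∉ C) (ht : ctag t = 1) :
    StepAlg (C, t, .mu (a + 2) (W k a)) (insert (t, .mu (a + 2) (W k a)) C, t, W k a) := by
  have := StepAlg.recR (C := C) h (not_mu ht)
  rw [subst_W] at this
  exact this

theorem not_mem_insert_of {C : Set (SType × SType)} {p q} (h : p ∉ C)
    (hne : ctag p.1 ≠ ctag q.1 ∨ cbd p.1 ≠ cbd q.1 ∨ cln p.1 ≠ cln q.1 ∨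
      ctag p.2 ≠ ctag q.2 ∨ cbd p.2 ≠ cbd q.2) : p ∉ insert q C := by
  rintro (rfl | h')
  · simp at hne
  · exact h h'

/-- The invariant at level `l`. -/
def Inv (k l : ℕ) (α : ℕ → ℕ) (C : Set (SType × SType)) : Prop :=
  (∀ p ∈ C, Ok k l α p) ∧ ∀ i, 1 ≤ i → i ≤ l → mm k (α i) i ∈ C

theorem step_level (k l : ℕ) (α : ℕ → ℕ) (C) (hl : l + 1 < k) (hα : α (l + 1) < k - (l + 1))
    (hC : Inv k l α C) : ∃ C', Inv k (l + 1) α C' ∧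
      ReachesAlg (C, Sexp k (k - l), Sexp (k + 1) (k + 1))
        (C', Sexp k (k - (l + 1)), Sexp (k + 1) (k + 1)) := by
  obtain ⟨hok, hmem⟩ := hC
  obtain ⟨a, ha⟩ : ∃ a, a = α (l + 1) := ⟨_, rfl⟩
  rw [← ha] at hα
  have hno := noInp_of_ok hok
  -- descend to the payload
  have r1 : ReachesAlg (C, Sexp k (k - l), Sexp (k + 1) (k + 1))
      (C, Sexp k (a + 1), Sexp (k + 1) (a + (l + 1) + 1)) := by
    have := reach_SS hno k (k + 1) (a + 1) (a + (l + 1) + 1) (k - l - (a + 1))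
    rwa [show a + 1 + (k - l - (a + 1)) = k - l by omega,
      show a + (l + 1) + 1 + (k - l - (a + 1)) = k + 1 by omega] at this
  have r2 : StepAlg (C, Sexp k (a + 1), Sexp (k + 1) (a + (l + 1) + 1))
      (C, .mu (a + 2) (W k a), .mu (a + (l + 1) + 2) (W (k + 1) (a + (l + 1)))) :=
    StepAlg.inp_payload (ts := [.mu (a + 2) (W k a)])
      (us := [.mu (a + (l + 1) + 2) (W (k + 1) (a + (l + 1)))])
      0 (hno _ _ _ _) rfl (by simp) (by simp)
  have n1 : mm k a (l + 1) ∉ C := by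
    intro h
    have := hok _ h
    simp only [Ok, mm, ctag_mu, cbd_mu] at this
    omega
  have r3 := step_recL_Y n1
  have r4 : ∀ C₂, NoInp C₂ → (Sexp k (k - (l + 1)), Tk (k + 1)) ∉ C₂ →
      ReachesAlg (C₂, Sexp k k, W (k + 1) (l + 1))
        (insert (Sexp k (k - (l + 1)), Tk (k + 1)) C₂,
          Sexp k (k - (l + 1)), Sexp (k + 1) (k + 1)) := by
    intro C₂ h1 h2
    have := reach_SW h1 k (k + 1) (k - (l + 1)) 0 (l + 1)
    rw [show k - (l + 1) + (l + 1) = k by omega, Nat.zero_add, W_zero] at this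
    exact this.tail (step_recR_T h2 (by simp; omega))
  have n5 : (Sexp k (k - (l + 1)), Tk (k + 1)) ∉ C := by
    intro h
    have := hok _ h
    simp only [Ok, ctag_S, cbd_S, cln_S, ctag_Tk, cbd_Tk] at this
    omega
  have n2 : (W k a, SType.mu (a + (l + 1) + 2) (W (k + 1) (a + (l + 1)))) ∉ C := by
    intro h
    have := hok _ h
    simp only [Ok, ctag_W, cbd_W, cln_W, ctag_mu, cbd_mu] at this
    omega
  have n3 : (Tk k, W (k + 1) (l + 1)) ∉ C := by
    intro h
    have := hok _ h
    simp only [Ok, ctag_W, cbd_W, cln_W, ctag_Tk, cbd_Tk, cln_Tk] at this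
    omega
  have n4 : (Sexp k k, SType.mu (l + 1 + 2) (W (k + 1) (l + 1))) ∉ C := by
    intro h
    have := hok _ h
    simp only [Ok, ctag_S, cbd_S, cln_S, ctag_mu, cbd_mu] at this
    omega
  have o1 : Ok k (l + 1) α (mm k a (l + 1)) :=
    Or.inr (Or.inr (Or.inl ⟨l + 1, by omega, le_rfl, by simp [mm, ha]⟩))
  have o2 : Ok k (l + 1) α (W k a, SType.mu (a + (l + 1) + 2) (W (k + 1) (a + (l + 1)))) :=
    Or.inr (Or.inr (Or.inr (Or.inl ⟨l + 1, a, by omega, le_rfl, by simp⟩)))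
  have o3 : Ok k (l + 1) α (Tk k, W (k + 1) (l + 1)) :=
    Or.inr (Or.inr (Or.inr (Or.inr (Or.inl ⟨l + 1, by omega, le_rfl, by simp⟩))))
  have o4 : Ok k (l + 1) α (Sexp k k, SType.mu (l + 1 + 2) (W (k + 1) (l + 1))) :=
    Or.inr (Or.inr (Or.inr (Or.inr (Or.inr ⟨l + 1, by omega, le_rfl, by simp; omega⟩))))
  have o5 : Ok k (l + 1) α (Sexp k (k - (l + 1)), Tk (k + 1)) :=
    Or.inr (Or.inl ⟨l + 1, le_rfl, by simp; omega⟩)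
  have hmem' : ∀ C' : Set (SType × SType), C ⊆ C' → mm k a (l + 1) ∈ C' →
      ∀ i, 1 ≤ i → i ≤ l + 1 → mm k (α i) i ∈ C' := by
    intro C' hs hm i h1 h2
    rcases Nat.lt_or_ge l i with h | h
    · obtain rfl : i = l + 1 := by omega
      rw [← ha]; exact hm
    · exact hs (hmem i h1 h)
  have r13 := (r1.tail r2).tail r3
  rcases Nat.eq_zero_or_pos a with h0 | hpos
  · clear ha
    subst h0
    simp only [Nat.zero_add] at *
    rw [W_zero] at *
    refine ⟨insert (Sexp k (k - (l + 1)), Tk (k + 1))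
      (insert (Sexp k k, SType.mu (l + 1 + 2) (W (k + 1) (l + 1)))
      (insert (Tk k, SType.mu (l + 1 + 2) (W (k + 1) (l + 1)))
      (insert (mm k 0 (l + 1)) C))), ⟨?_, ?_⟩, ?_⟩
    · rintro p (rfl | rfl | rfl | rfl | hp)
      exacts [o5, o4, o2, o1, (hok p hp).mono]
    · apply hmem'
      · intro p hp; simp [hp]
      · simp
    · simp only [mm, Nat.zero_add, W_zero]
      refine Relation.ReflTransGen.trans ((r13.tail (step_recL_T ?_)).tail (step_recR_Y ?_ ?_))
        (r4 _ ?_ ?_)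
      · refine not_mem_insert_of n2 ?_
        simp
      · refine not_mem_insert_of (not_mem_insert_of n4 ?_) ?_
        · simp; omega
        · simp; omega
      · simp; omega
      · exact ((hno.insert (by simp)).insert (by simp)).insert (by simp)
      · refine not_mem_insert_of (not_mem_insert_of (not_mem_insert_of n5 ?_) ?_) ?_ <;> simp
  · refine ⟨insert (Sexp k (k - (l + 1)), Tk (k + 1))
      (insert (Tk k, W (k + 1) (l + 1))
      (insert (W k a, SType.mu (a + (l + 1) + 2) (W (k + 1) (a + (l + 1))))
      (insert (mm k a (l + 1)) C))), ⟨?_, ?_⟩, ?_⟩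
    · rintro p (rfl | rfl | rfl | rfl | hp)
      exacts [o5, o3, o2, o1, (hok p hp).mono]
    · apply hmem'
      · intro p hp; simp [hp]
      · simp
    · have hn2 : NoInp (insert (W k a, SType.mu (a + (l + 1) + 2) (W (k + 1) (a + (l + 1))))
          (insert (mm k a (l + 1)) C)) := (hno.insert (by simp [mm])).insert (by simp)
      have r5 := reach_WW hn2 k (k + 1) 0 (l + 1) a
      rw [Nat.zero_add, W_zero, Nat.add_comm (l + 1) a] at r5
      refine Relation.ReflTransGen.trans
        (((r13.tail (step_recR_Y ?_ ?_)).trans r5).tail (step_recL_T ?_)) (r4 _ ?_ ?_)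
      · refine not_mem_insert_of n2 ?_
        simp; omega
      · simp; omega
      · refine not_mem_insert_of (not_mem_insert_of n3 ?_) ?_ <;> simp [mm]
      · exact hn2.insert (by simp)
      · refine not_mem_insert_of (not_mem_insert_of (not_mem_insert_of n5 ?_) ?_) ?_ <;> simp [mm]

theorem reach_level (k : ℕ) (hk : 1 ≤ k) (α : ℕ → ℕ) (l : ℕ) (hl : l < k)
    (hα : ∀ i, 1 ≤ i → i ≤ l → α i < k - i) : ∃ C, Inv k l α C ∧
      ReachesAlg (∅, Tk k, Tk (k + 1)) (C, Sexp k (k - l), Sexp (k + 1) (k + 1)) := by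
  induction l with
  | zero =>
    refine ⟨insert (Sexp k k, Tk (k + 1)) (insert (Tk k, Tk (k + 1)) ∅), ⟨?_, ?_⟩, ?_⟩
    · rintro p (rfl | rfl | hp)
      · exact Or.inr (Or.inl ⟨0, le_rfl, by simp; omega⟩)
      · exact Or.inl (by simp)
      · exact absurd hp (by simp)
    · intro i h1 h2; omega
    · refine (Relation.ReflTransGen.single (step_recL_T (by simp))).tail (step_recR_T ?_ ?_)
      · refine not_mem_insert_of (by simp) ?_
        simp; omega
      · simp; omega
  | succ l ih =>
    obtain ⟨C, h1, h2⟩ := ih (by omega) (fun i a b => hα i a (by omega))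
    obtain ⟨C', h3, h4⟩ := step_level k l α C hl (hα _ (by omega) le_rfl) h1
    exact ⟨C', h3, h2.trans h4⟩

theorem Inv.det {k l α β C} (h1 : Inv k l α C) (h2 : Inv k l β C) (i : ℕ) (hi : 1 ≤ i)
    (hl : i ≤ l) : α i = β i := by
  have := h2.1 _ (h1.2 i hi hl)
  simp only [Ok, mm, ctag_mu, cbd_mu] at this
  rcases this with h | ⟨j, h⟩ | ⟨j, h⟩ | ⟨j, a, h⟩ | ⟨j, h⟩ | ⟨j, h⟩
  · omega
  · omega
  · obtain rfl : i = j := by omega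
    omega
  all_goals omega

/-- The sequence attached to a point of the finite product. -/
def seqOf (n : ℕ) (f : (i : Fin n) → Fin (i + 1)) (i : ℕ) : ℕ :=
  if h : n - i < n then f ⟨n - i, h⟩ else 0

theorem seqOf_eq (n : ℕ) (f : (i : Fin n) → Fin (i + 1)) (i j : ℕ) (hj : j < n)
    (h : n - i = j) : seqOf n f i = f ⟨j, hj⟩ := by
  subst h
  rw [seqOf, dif_pos hj]

theorem factorial_bound (k : ℕ) (hk : 1 ≤ k) : (Nat.factorial (k - 1) : ℕ∞) ≤
      {j : Judgement | ReachesAlg (∅, Tk k, Tk (k + 1)) j}.encard := by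
  have key : ∀ f : (i : Fin (k - 1)) → Fin (i + 1), ∃ C, Inv k (k - 1) (seqOf (k - 1) f) C ∧
      ReachesAlg (∅, Tk k, Tk (k + 1)) (C, Sexp k (k - (k - 1)), Sexp (k + 1) (k + 1)) := by
    intro f
    refine reach_level k hk _ (k - 1) (by omega) ?_
    intro i h1 h2
    have h : k - 1 - i < k - 1 := by omega
    rw [seqOf, dif_pos h]
    have := (f ⟨k - 1 - i, h⟩).2
    simp only at this
    omega
  choose D hD hR using key
  have hinj : Function.Injective
      (fun f => ((D f, Sexp k (k - (k - 1)), Sexp (k + 1) (k + 1)) : Judgement)) := by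
    intro f g hfg
    have hDe : D f = D g := congrArg Prod.fst hfg
    have h1 := hD f
    rw [hDe] at h1
    funext ⟨i, hi⟩
    have := h1.det (hD g) (k - 1 - i) (by omega) (by omega)
    have e : k - 1 - (k - 1 - i) = i := by omega
    rw [seqOf_eq _ _ _ _ hi e, seqOf_eq _ _ _ _ hi e] at this
    exact Fin.ext this
  have hsub : Set.range (fun f => ((D f, Sexp k (k - (k - 1)), Sexp (k + 1) (k + 1)) : Judgement))
      ⊆ {j : Judgement | ReachesAlg (∅, Tk k, Tk (k + 1)) j} := by
    rintro _ ⟨f, rfl⟩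
    exact hR f
  refine le_trans (le_of_eq ?_) (Set.encard_le_encard hsub)
  rw [← Set.image_univ, hinj.encard_image, Set.encard_univ, ENat.card_eq_coe_fintype_card,
    Fintype.card_pi]
  simp only [Fintype.card_fin]
  rw [Fin.prod_univ_eq_prod_range (fun i => i + 1), Finset.prod_range_add_one_eq_factorial]

end SType

/-- Distinct sequences `(α₁, …, α_l)` with `0 ≤ αᵢ < k − i`
(over all `0 ≤ l < k`) yield distinct assumption sets `𝒮_l`; hence the
derivation tree of `∅ ⊢ T_k ≤ T_{k+1}` built from the algorithmic subtyping
rules contains at least `(k−1)!` distinct judgements. -/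
theorem calS_injective_and_factorial_lower_bound (k : ℕ) (hk : 1 ≤ k) :
    (∀ (l₁ l₂ : ℕ) (α₁ α₂ : ℕ → ℕ), l₁ < k → l₂ < k →
      (∀ i, 1 ≤ i → i ≤ l₁ → α₁ i < k - i) →
      (∀ i, 1 ≤ i → i ≤ l₂ → α₂ i < k - i) →
      SType.calS k l₁ α₁ = SType.calS k l₂ α₂ →
      l₁ = l₂ ∧ ∀ i, 1 ≤ i → i ≤ l₁ → α₁ i = α₂ i) ∧
    (Nat.factorial (k - 1) : ℕ∞) ≤
      {j : SType.Judgement |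
        SType.ReachesAlg (∅, SType.Tk k, SType.Tk (k + 1)) j}.encard := by
  refine ⟨?_, SType.factorial_bound k hk⟩
  intro l₁ l₂ α₁ α₂ _ _ _ _ h
  have h12 := SType.calS_aux k l₁ l₂ α₁ α₂ h
  have h21 := SType.calS_aux k l₂ l₁ α₂ α₁ h.symm
  refine ⟨?_, fun i a b => (h12 i a b).2⟩
  rcases Nat.eq_zero_or_pos l₁ with h1 | h1 <;> rcases Nat.eq_zero_or_pos l₂ with h2 | h2
  · omega
  · have := (h21 l₂ h2 le_rfl).1; omega
  · have := (h12 l₁ h1 le_rfl).1; omega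
  · have := (h21 l₂ h2 le_rfl).1
    have := (h12 l₁ h1 le_rfl).1; omega
end
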